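/- (Convergence case of the S-arithmetic Khintchine–Groshev theorem with congruence conditions) Assume d = m + n ≥ 2. Let ψ = (ψ_p)_{p∈S} be a collection of approximating functions, fix N ∈ ℕ_S and a pair (v_m, v_n) ∈ ℤ_S^m × ℤ_S^n. If ∫_{ℚ_S^n} ∏_{p∈S} ψ_p(‖y‖_p^n) dy < ∞, then for almost every A = (A_p)_{p∈S} ∈ Mat_{m,n}(ℚ_S) (with respect to Haar measure) there are only finitely many pairs (p⃗, q⃗) ∈ ℤ_S^m × ℤ_S^n with (p⃗, q⃗) ≡ (v_m, v_n) mod N satisfying ‖A_p q⃗ + p⃗‖_p^m ≤ ψ_p(‖q⃗‖_p^n) for all p ∈ S. -/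

import Mathlib

open MeasureTheory Matrix

noncomputable section

/-- `z` belongs to the ring of `S`-integers `ℤ_S = ℤ[1/P]`,
where `P` is the product of the finite primes in `S`. -/
def IsZS (P : ℕ) (z : ℚ) : Prop := ∃ (a : ℤ) (k : ℕ), z = (a : ℚ) / (P : ℚ) ^ k

/-- A collection of approximating functions `ψ = (ψ_p)_{p ∈ S}`:
each `ψ_p : ℝ_{>0} → ℝ_{>0}` is non-increasing and `≡ 1` on `(0,1]`
(we extend by `1` on `t ≤ 1`); moreover for each finite place `p`,
`ψ_p` is constant on `{p^{kn}, …, p^{kn+n-1}}` for every `k ∈ ℤ` and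
takes values in `p^{mℤ}` on `p^ℤ`. -/
structure ApproxFamily (m n s : ℕ) (p : Fin s → ℕ) : Type where
  psiR : ℝ → ℝ
  psiP : Fin s → ℝ → ℝ
  posR : ∀ t, 0 < psiR t
  antiR : ∀ ⦃t₁ t₂ : ℝ⦄, 0 < t₁ → t₁ ≤ t₂ → psiR t₂ ≤ psiR t₁
  oneR : ∀ ⦃t : ℝ⦄, t ≤ 1 → psiR t = 1
  posP : ∀ i t, 0 < psiP i t
  antiP : ∀ i ⦃t₁ t₂ : ℝ⦄, 0 < t₁ → t₁ ≤ t₂ → psiP i t₂ ≤ psiP i t₁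
  oneP : ∀ i ⦃t : ℝ⦄, t ≤ 1 → psiP i t = 1
  constP : ∀ i (k : ℤ) (j : ℕ), j < n →
    psiP i ((p i : ℝ) ^ (k * n + j : ℤ)) = psiP i ((p i : ℝ) ^ (k * n : ℤ))
  valsP : ∀ i (k : ℤ), ∃ l : ℤ, psiP i ((p i : ℝ) ^ k) = (p i : ℝ) ^ (m * l : ℤ)

/-- The real components of the diagonal embedding of a rational vector. -/
def ratR {k : ℕ} (q : Fin k → ℚ) : Fin k → ℝ := fun j => (q j : ℝ)

/-- The `p i`-adic components of the diagonal embedding of a rational vector. -/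
def ratP {s : ℕ} (p : Fin s → ℕ) [∀ i, Fact (p i).Prime] {k : ℕ} (i : Fin s)
    (q : Fin k → ℚ) : Fin k → ℚ_[p i] := fun j => (q j : ℚ_[p i])

/-- The region `E_f(T) ⊆ ℚ_S^m × ℚ_S^n` cut out by `‖x‖_p^m ≤ f_p(‖y‖_p^n)` and
`‖y‖_p^n ≤ T_p` for all `p ∈ S` (product coordinates). -/
def Eprod (m n : ℕ) {s : ℕ} (p : Fin s → ℕ) [∀ i, Fact (p i).Prime]
    (fR : ℝ → ℝ) (fP : Fin s → ℝ → ℝ) (TR : ℝ) (TP : Fin s → ℝ) :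
    Set (((Fin m → ℝ) × ∀ i, Fin m → ℚ_[p i]) × ((Fin n → ℝ) × ∀ i, Fin n → ℚ_[p i])) :=
  {xy | ‖xy.1.1‖ ^ m ≤ fR (‖xy.2.1‖ ^ n) ∧ ‖xy.2.1‖ ^ n ≤ TR ∧
      ∀ i, ‖xy.1.2 i‖ ^ m ≤ fP i (‖xy.2.2 i‖ ^ n) ∧ ‖xy.2.2 i‖ ^ n ≤ TP i}

/-- The region `E_f(T) ⊆ ℚ_S^{m+n}`, where the first `m` coordinates play the role of
`x` and the last `n` coordinates the role of `y`. -/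
def Efull (m n : ℕ) {s : ℕ} (p : Fin s → ℕ) [∀ i, Fact (p i).Prime]
    (fR : ℝ → ℝ) (fP : Fin s → ℝ → ℝ) (TR : ℝ) (TP : Fin s → ℝ) :
    Set ((Fin (m + n) → ℝ) × ∀ i, Fin (m + n) → ℚ_[p i]) :=
  {v | ‖fun a : Fin m => v.1 (Fin.castAdd n a)‖ ^ m
        ≤ fR (‖fun b : Fin n => v.1 (Fin.natAdd m b)‖ ^ n) ∧
      ‖fun b : Fin n => v.1 (Fin.natAdd m b)‖ ^ n ≤ TR ∧
      ∀ i, ‖fun a : Fin m => v.2 i (Fin.castAdd n a)‖ ^ m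
            ≤ fP i (‖fun b : Fin n => v.2 i (Fin.natAdd m b)‖ ^ n) ∧
          ‖fun b : Fin n => v.2 i (Fin.natAdd m b)‖ ^ n ≤ TP i}

/-- The operator norm of a real matrix acting on sup-normed spaces. -/
def opNorm {k l : ℕ} (M : Matrix (Fin k) (Fin l) ℝ) : ℝ :=
  ‖LinearMap.toContinuousLinearMap M.mulVecLin‖

/-- An element of the group `𝐇 = ∏_{p ∈ S} H_p` of block lower-triangular matrices,
given by its blocks at each place. -/
structure HElem (m n : ℕ) (s : ℕ) (p : Fin s → ℕ) [∀ i, Fact (p i).Prime] : Type where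
  aR : Matrix (Fin m) (Fin m) ℝ
  bR : Matrix (Fin n) (Fin m) ℝ
  cR : Matrix (Fin n) (Fin n) ℝ
  aP : ∀ i, Matrix (Fin m) (Fin m) ℚ_[p i]
  bP : ∀ i, Matrix (Fin n) (Fin m) ℚ_[p i]
  cP : ∀ i, Matrix (Fin n) (Fin n) ℚ_[p i]

/-- The action of an element of `𝐇` on `ℚ_S^m × ℚ_S^n`:
`h·(x, y) = (α x, β x + γ y)` at each place. -/
def HElem.act {m n s : ℕ} {p : Fin s → ℕ} [∀ i, Fact (p i).Prime] (h : HElem m n s p)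
    (xy : ((Fin m → ℝ) × ∀ i, Fin m → ℚ_[p i]) × ((Fin n → ℝ) × ∀ i, Fin n → ℚ_[p i])) :
    ((Fin m → ℝ) × ∀ i, Fin m → ℚ_[p i]) × ((Fin n → ℝ) × ∀ i, Fin n → ℚ_[p i]) :=
  ((h.aR.mulVec xy.1.1, fun i => (h.aP i).mulVec (xy.1.2 i)),
   (h.bR.mulVec xy.1.1 + h.cR.mulVec xy.2.1,
    fun i => (h.bP i).mulVec (xy.1.2 i) + (h.cP i).mulVec (xy.2.2 i)))

/-- Membership in `H̃_{∞,ε}`: operator norm bounds on the blocks. -/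
def inHtilde (m n : ℕ) (ε : ℝ) (α : Matrix (Fin m) (Fin m) ℝ) (β : Matrix (Fin n) (Fin m) ℝ)
    (γ : Matrix (Fin n) (Fin n) ℝ) : Prop :=
  opNorm α ^ m ≤ 1 + ε ∧ opNorm γ ^ n ≤ 1 + ε / 2 ∧ opNorm β ≤ ε / (4 * n)

/-- `h ∈ (H̃_{∞,ε} ∩ H̃_{∞,ε}⁻¹) × ∏_{p ∈ S_f} H_p(ℤ_p)`. -/
def HElem.isAdmissible {m n s : ℕ} {p : Fin s → ℕ} [∀ i, Fact (p i).Prime]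
    (h : HElem m n s p) (ε : ℝ) : Prop :=
  IsUnit h.aR.det ∧ IsUnit h.cR.det ∧
  inHtilde m n ε h.aR h.bR h.cR ∧
  inHtilde m n ε h.aR⁻¹ (-(h.cR⁻¹ * h.bR * h.aR⁻¹)) h.cR⁻¹ ∧
  ∀ i, ((∀ a b, ‖h.aP i a b‖ ≤ 1) ∧ ‖(h.aP i).det‖ = 1) ∧
      ((∀ a b, ‖h.cP i a b‖ ≤ 1) ∧ ‖(h.cP i).det‖ = 1) ∧
      (∀ a b, ‖h.bP i a b‖ ≤ 1)

end

open scoped Pointwise in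
/-- Let `F` be a fundamental domain for a countable subgroup of `G`, and let `φ : G → X` be a
surjective homomorphism mapping that subgroup into the image of `j : L → X`. Averaging over `F` the
number of points of `φ A + j L` in `E` gives an invariant measure on `X`, hence a multiple of Haar
measure; the multiple is bounded by testing on a set `D` with disjoint translates. -/
theorem tsum_measure_translate_preimage_mul_le {G X : Type*}
    [AddCommGroup G] [TopologicalSpace G] [IsTopologicalAddGroup G] [MeasurableSpace G]
    [BorelSpace G]
    [AddCommGroup X] [TopologicalSpace X] [IsTopologicalAddGroup X] [LocallyCompactSpace X]
    [MeasurableSpace X] [BorelSpace X]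
    (κ : Measure G) [κ.IsAddLeftInvariant] (ξ : Measure X) [ξ.IsAddHaarMeasure]
    (ΛG : AddSubgroup G) [Countable ΛG] {F : Set G} (hF : IsAddFundamentalDomain ΛG F κ)
    (hκF : κ F ≠ ⊤) {L : Type*} [AddGroup L] [Countable L] (j : L →+ X)
    (φ : G →+ X) (hφ : Continuous φ) (hφs : Function.Surjective φ)
    (hφΛ : ∀ g ∈ ΛG, ∃ l, φ g = j l) {D : Set X} (hDm : MeasurableSet D)
    (hDi : (interior D).Nonempty)
    (hDc : IsCompact (closure D))
    (hD : ∀ x g h, x + j g ∈ D → x + j h ∈ D → g = h)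
    {E : Set X} (hEm : MeasurableSet E) (hEc : IsCompact (closure E)) :
    (∑' g : L, κ (F ∩ {A | φ A + j g ∈ E})) * ξ D ≤ κ F * ξ E := by
  classical
  have hmeas : ∀ g : L, Measurable (fun A => φ A + j g) := fun g =>
    (hφ.add continuous_const).measurable
  set ρ : Measure X := Measure.sum fun g : L => (κ.restrict F).map (fun A => φ A + j g)
    with hρ
  have hρE : ∀ S, MeasurableSet S →
      ρ S = ∫⁻ A in F, ∑' g : L, S.indicator 1 (φ A + j g) ∂κ := by
    intro S hS
    rw [hρ, Measure.sum_apply _ hS, lintegral_tsum]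
    · refine tsum_congr fun g => ?_
      rw [Measure.map_apply (hmeas g) hS, ← lintegral_indicator_one ((hmeas g) hS)]
      rfl
    · exact fun g => ((measurable_one.indicator hS).comp (hmeas g)).aemeasurable
  have hρE' : ∀ S, MeasurableSet S → ρ S = ∑' g : L, κ (F ∩ {A | φ A + j g ∈ S}) := by
    intro S hS
    rw [hρ, Measure.sum_apply _ hS]
    refine tsum_congr fun g => ?_
    rw [Measure.map_apply (hmeas g) hS, Measure.restrict_apply ((hmeas g) hS), Set.inter_comm]
    rfl
  have hinv : ρ.IsAddLeftInvariant := by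
    refine ⟨fun x => ?_⟩
    obtain ⟨B, rfl⟩ := hφs x
    ext S hS
    have hS' : MeasurableSet ((fun y => φ B + y) ⁻¹' S) := (measurable_const_add _) hS
    rw [Measure.map_apply (measurable_const_add _) hS, hρE _ hS', hρE _ hS]
    set f : G → ENNReal := fun A => ∑' g : L, S.indicator 1 (φ A + j g) with hf
    have h1 : ∀ A, (∑' g : L, ((fun y => φ B + y) ⁻¹' S).indicator (1 : X → ENNReal)
        (φ A + j g)) = f (B +ᵥ A) := by
      intro A
      refine tsum_congr fun g => ?_
      simp only [Set.indicator, Set.mem_preimage, vadd_eq_add, map_add, add_assoc, Pi.one_apply]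
    simp_rw [h1]
    have hfinv : ∀ (g : ΛG) (A : G), f (g +ᵥ A) = f A := by
      intro g A
      simp only [hf]
      obtain ⟨l, hl⟩ := hφΛ g g.2
      rw [← (Equiv.addLeft l).tsum_eq
        (fun h : L => S.indicator (1 : X → ENNReal) (φ A + j h))]
      refine tsum_congr fun h => ?_
      have : (g +ᵥ A : G) = g + A := rfl
      rw [this, map_add, hl, Equiv.coe_addLeft, map_add]
      congr 1
      abel
    have hFB : IsAddFundamentalDomain ΛG (B +ᵥ F) κ := hF.vadd_of_comm B
    rw [hF.setLIntegral_eq hFB f hfinv]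
    have hmp : MeasurePreserving (fun A : G => B +ᵥ A) κ κ := measurePreserving_vadd B κ
    have := hmp.setLIntegral_comp_emb (measurableEmbedding_const_vadd B) f F
    exact this
  have hρD : ρ D ≤ κ F := by
    rw [hρE D hDm, ← setLIntegral_one F]
    refine lintegral_mono fun A => ?_
    by_cases h : ∃ g : L, φ A + j g ∈ D
    · obtain ⟨g, hg⟩ := h
      rw [tsum_eq_single g]
      · exact Set.indicator_le_self' (by simp) _
      · intro h hne
        refine Set.indicator_of_notMem (fun hh => hne ?_) _
        exact hD _ _ _ hh hg
    · push Not at h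
      simp [h]
  have hlf : IsLocallyFiniteMeasure ρ := by
    refine ⟨fun x => ?_⟩
    obtain ⟨d, hd⟩ := hDi
    refine ⟨(fun y => (d - x) + y) ⁻¹' D, ?_, ?_⟩
    · refine (continuous_const_add (d - x)).continuousAt.preimage_mem_nhds ?_
      simpa using mem_interior_iff_mem_nhds.1 hd
    · rw [measure_preimage_add]
      exact hρD.trans_lt (lt_top_iff_ne_top.2 hκF)
  have e1 := Measure.measure_isAddInvariant_eq_smul_of_isCompact_closure ρ ξ hDc
  have e2 := Measure.measure_isAddInvariant_eq_smul_of_isCompact_closure ρ ξ hEc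
  rw [← hρE' E hEm, e2]
  rw [e1] at hρD
  calc _ = (ρ.addHaarScalarFactor ξ • ξ D) * ξ E := by
        simp only [ENNReal.smul_def, smul_eq_mul]; ring
    _ ≤ _ := by gcongr

theorem IsZS.intCast (P : ℕ) (a : ℤ) : IsZS P a := ⟨a, 0, by simp⟩

theorem IsZS.neg {P : ℕ} {x : ℚ} (hx : IsZS P x) : IsZS P (-x) := by
  obtain ⟨a, k, rfl⟩ := hx
  exact ⟨-a, k, by push_cast; ring⟩

theorem IsZS.add {P : ℕ} (hP : P ≠ 0) {x y : ℚ} (hx : IsZS P x) (hy : IsZS P y) :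
    IsZS P (x + y) := by
  obtain ⟨a, k, rfl⟩ := hx
  obtain ⟨b, l, rfl⟩ := hy
  refine ⟨a * P ^ l + b * P ^ k, k + l, ?_⟩
  have : (P : ℚ) ≠ 0 := by exact_mod_cast hP
  push_cast
  field_simp
  ring

theorem IsZS.sub {P : ℕ} (hP : P ≠ 0) {x y : ℚ} (hx : IsZS P x) (hy : IsZS P y) :
    IsZS P (x - y) := sub_eq_add_neg x y ▸ hx.add hP hy.neg

theorem IsZS.mul {P : ℕ} {x y : ℚ} (hx : IsZS P x) (hy : IsZS P y) : IsZS P (x * y) := by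
  obtain ⟨a, k, rfl⟩ := hx
  obtain ⟨b, l, rfl⟩ := hy
  exact ⟨a * b, k + l, by push_cast; rw [pow_add, div_mul_div_comm]⟩

theorem IsZS.sum {P : ℕ} (hP : P ≠ 0) {ι : Type*} (t : Finset ι) {f : ι → ℚ}
    (hf : ∀ i ∈ t, IsZS P (f i)) : IsZS P (∑ i ∈ t, f i) :=
  Finset.sum_induction f (IsZS P) (fun _ _ => IsZS.add hP) (by simpa using IsZS.intCast P 0) hf

section Places

variable {s : ℕ} (p : Fin s → ℕ) [∀ i, Fact (p i).Prime]

theorem prod_primes_ne_zero : ∏ i, p i ≠ 0 :=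
  Finset.prod_ne_zero_iff.2 fun i _ => (Fact.out : (p i).Prime).ne_zero

/-- An `S`-integer which is integral at every finite place of `S` is an integer. -/
theorem IsZS.exists_int_eq {z : ℚ} (hz : IsZS (∏ i, p i) z)
    (h : ∀ i, ‖(z : ℚ_[p i])‖ ≤ 1) : ∃ k : ℤ, z = k := by
  obtain ⟨a, k, hk⟩ := hz
  have hP : ((∏ i, p i : ℕ) : ℚ) ≠ 0 := by exact_mod_cast prod_primes_ne_zero p
  have hden : z.den ∣ (∏ i, p i) ^ k := by
    have := Rat.den_dvd a ((∏ i, p i : ℕ) ^ k : ℤ)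
    rw [Rat.divInt_eq_div] at this
    push_cast at this hk
    rw [← hk] at this
    exact_mod_cast this
  have hcop : Nat.Coprime z.den ((∏ i, p i) ^ k) := by
    refine Nat.Coprime.pow_right _ (Nat.Coprime.prod_right fun i _ => ?_)
    rw [Nat.coprime_comm, (Fact.out : (p i).Prime).coprime_iff_not_dvd,
      ← Rat.padicValuation_le_one_iff]
    exact (Padic.norm_rat_le_one_iff_padicValuation_le_one (p i)).1 (h i)
  have h1 : z.den = 1 := Nat.Coprime.eq_one_of_dvd hcop hden
  exact ⟨z.num, (Rat.den_eq_one_iff z).1 h1 |>.symm⟩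

/-- Every `p`-adic number agrees with an element of `ℤ[1/p]` up to a `p`-adic integer. -/
theorem Padic.exists_div_pow_sub_norm_le_one (q : ℕ) [Fact q.Prime] (x : ℚ_[q]) :
    ∃ (a k : ℕ), ‖x - ((a / q ^ k : ℚ) : ℚ_[q])‖ ≤ 1 := by
  have hq : (q : ℚ_[q]) ≠ 0 := by exact_mod_cast (Fact.out : q.Prime).ne_zero
  obtain ⟨k, hk⟩ : ∃ k : ℕ, ‖(q : ℚ_[q]) ^ k * x‖ ≤ 1 := by
    obtain ⟨k, hk⟩ := pow_unbounded_of_one_lt ‖x‖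
      (by exact_mod_cast (Fact.out : q.Prime).one_lt : (1 : ℝ) < q)
    refine ⟨k, ?_⟩
    rw [norm_mul, norm_pow, Padic.norm_p, inv_pow]
    have : (0 : ℝ) < q ^ k := lt_of_le_of_lt (norm_nonneg _) hk
    rw [inv_mul_le_iff₀ this]
    simpa using hk.le
  set y : ℤ_[q] := ⟨_, hk⟩ with hy
  refine ⟨y.appr k, k, ?_⟩
  have h := (PadicInt.norm_le_pow_iff_mem_span_pow _ k).2 (PadicInt.appr_spec k y)
  rw [PadicInt.norm_def] at h
  have e : x - (((y.appr k : ℕ) / q ^ k : ℚ) : ℚ_[q])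
      = ((q : ℚ_[q]) ^ k)⁻¹ * ((y - (y.appr k : ℕ) : ℤ_[q]) : ℚ_[q]) := by
    push_cast
    rw [hy]
    field_simp
  rw [e, norm_mul, norm_inv, norm_pow, Padic.norm_p, inv_pow, inv_inv]
  have hpos : (0 : ℝ) < q ^ k := by have := (Fact.out : q.Prime).pos; positivity
  rw [_root_.zpow_neg, zpow_natCast] at h
  calc _ ≤ (q : ℝ) ^ k * ((q : ℝ) ^ k)⁻¹ := by gcongr
    _ = 1 := mul_inv_cancel₀ hpos.ne'

/-- Strong approximation for `ℤ_S` in `ℚ_S`. -/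
theorem exists_isZS_add_mem (hp : Function.Injective p) (r : ℝ) (x : ∀ i, ℚ_[p i]) :
    ∃ z : ℚ, IsZS (∏ i, p i) z ∧ (0 ≤ (z : ℝ) + r ∧ (z : ℝ) + r < 1) ∧
      ∀ i, ‖(z : ℚ_[p i]) + x i‖ ≤ 1 := by
  choose a k hak using fun i => Padic.exists_div_pow_sub_norm_le_one (p i) (x i)
  have hP := prod_primes_ne_zero p
  set w : ℚ := ∑ i, (a i / (p i) ^ (k i) : ℚ) with hw
  have hwZ : IsZS (∏ i, p i) w := by
    refine IsZS.sum hP _ fun i _ => ?_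
    have hd : ∏ j, p j = p i * ∏ j ∈ Finset.univ.erase i, p j :=
      (Finset.mul_prod_erase _ _ (Finset.mem_univ i)).symm
    refine ⟨a i * (∏ j ∈ Finset.univ.erase i, p j : ℕ) ^ (k i), k i, ?_⟩
    have h2 : ((∏ j ∈ Finset.univ.erase i, p j : ℕ) : ℚ) ≠ 0 := by
      intro h0
      rw [Nat.cast_eq_zero] at h0
      rw [hd, h0] at hP
      simp at hP
    have h3 : (p i : ℚ) ≠ 0 := by exact_mod_cast (Fact.out : (p i).Prime).ne_zero
    rw [hd]
    push_cast at h2 ⊢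
    rw [mul_pow]
    field_simp
  have hwx : ∀ i, ‖x i - (w : ℚ_[p i])‖ ≤ 1 := by
    intro i
    have e : x i - (w : ℚ_[p i]) = (x i - ((a i / (p i) ^ (k i) : ℚ) : ℚ_[p i]))
        + -∑ j ∈ Finset.univ.erase i, ((a j / (p j) ^ (k j) : ℚ) : ℚ_[p i]) := by
      rw [hw, ← Finset.add_sum_erase _ _ (Finset.mem_univ i)]
      push_cast
      ring
    rw [e]
    refine (Padic.nonarchimedean _ _).trans (max_le (hak i) ?_)
    rw [norm_neg]
    refine IsUltrametricDist.norm_sum_le_of_forall_le_of_nonneg zero_le_one fun j hj => ?_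
    have hji : j ≠ i := Finset.ne_of_mem_erase hj
    push_cast
    rw [norm_div, norm_pow]
    have h1 : ‖(p j : ℚ_[p i])‖ = 1 := by
      rw [Padic.norm_natCast_eq_one_iff]
      exact (Nat.coprime_primes Fact.out Fact.out).2 fun h => hji (hp h).symm
    rw [h1, one_pow, div_one]
    exact_mod_cast Padic.norm_int_le_one (a j : ℤ)
  refine ⟨-w - ⌊r - w⌋, (hwZ.neg).sub hP (IsZS.intCast _ _), ?_, fun i => ?_⟩
  · push_cast
    have h1 := Int.floor_le (r - w)
    have h2 := Int.lt_floor_add_one (r - w)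
    constructor <;> linarith
  · have e : ((-w - ⌊r - w⌋ : ℚ) : ℚ_[p i]) + x i = (x i - w) + ((-⌊r - w⌋ : ℤ) : ℚ_[p i]) := by
      push_cast
      ring
    rw [e]
    exact (Padic.nonarchimedean _ _).trans (max_le (hwx i) (Padic.norm_int_le_one _))

theorem IsZS.eq_of_add_mem {r : ℝ} {x : ∀ i, ℚ_[p i]} {z w : ℚ}
    (hz : IsZS (∏ i, p i) z) (hw : IsZS (∏ i, p i) w)
    (hzr : 0 ≤ (z : ℝ) + r ∧ (z : ℝ) + r < 1) (hwr : 0 ≤ (w : ℝ) + r ∧ (w : ℝ) + r < 1)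
    (hzx : ∀ i, ‖(z : ℚ_[p i]) + x i‖ ≤ 1) (hwx : ∀ i, ‖(w : ℚ_[p i]) + x i‖ ≤ 1) : z = w := by
  obtain ⟨k, hk⟩ := (hz.sub (prod_primes_ne_zero p) hw).exists_int_eq p fun i => by
    have e : ((z - w : ℚ) : ℚ_[p i]) = (z + x i) + -(w + x i) := by push_cast; ring
    rw [e]
    exact (Padic.nonarchimedean _ _).trans (max_le (hzx i) (by rw [norm_neg]; exact hwx i))
  have hkr : (z : ℝ) - w = k := by exact_mod_cast congrArg (fun q : ℚ => (q : ℝ)) hk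
  have h1 : (k : ℝ) < 1 := by linarith
  have h2 : (-1 : ℝ) < k := by linarith
  have h1' : k < 1 := by exact_mod_cast h1
  have h2' : -1 < k := by exact_mod_cast h2
  obtain rfl : k = 0 := by omega
  simpa [sub_eq_zero] using hk

end Places

section Boxes

variable {s : ℕ} (p : Fin s → ℕ) [∀ i, Fact (p i).Prime]

/-- The group `ℤ_S^k`. -/
def zsVec (k : ℕ) : AddSubgroup (Fin k → ℚ) where
  carrier := {q | ∀ a, IsZS (∏ i, p i) (q a)}
  add_mem' hx hy a := (hx a).add (prod_primes_ne_zero p) (hy a)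
  zero_mem' _ := by simpa using IsZS.intCast (∏ i, p i) 0
  neg_mem' hx a := (hx a).neg

/-- The group of `S`-integral matrices. -/
def zsMat (m n : ℕ) : AddSubgroup (Fin m → Fin n → ℚ) where
  carrier := {q | ∀ a b, IsZS (∏ i, p i) (q a b)}
  add_mem' hx hy a b := (hx a b).add (prod_primes_ne_zero p) (hy a b)
  zero_mem' _ _ := by simpa using IsZS.intCast (∏ i, p i) 0
  neg_mem' hx a b := (hx a b).neg

/-- The diagonal embedding of rational vectors in `ℚ_S^k`. -/
noncomputable def diagVec (k : ℕ) : (Fin k → ℚ) →+ (Fin k → ℝ) × ∀ i, Fin k → ℚ_[p i] where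
  toFun q := (ratR q, fun i => ratP p i q)
  map_zero' := by ext <;> simp [ratR, ratP]
  map_add' x y := by ext <;> simp [ratR, ratP]

/-- The diagonal embedding of rational matrices in `Mat_{m,n}(ℚ_S)`. -/
noncomputable def diagMat (m n : ℕ) :
    (Fin m → Fin n → ℚ) →+ (Fin m → Fin n → ℝ) × ∀ i, Fin m → Fin n → ℚ_[p i] where
  toFun q := (fun a b => (q a b : ℝ), fun i a b => (q a b : ℚ_[p i]))
  map_zero' := by ext <;> simp
  map_add' x y := by ext <;> simp

/-- The box `[0,1)^k × ∏ ℤ_p^k`. -/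
def unitBoxVec (k : ℕ) : Set ((Fin k → ℝ) × ∀ i, Fin k → ℚ_[p i]) :=
  {x | (∀ a, 0 ≤ x.1 a ∧ x.1 a < 1) ∧ ∀ i a, ‖x.2 i a‖ ≤ 1}

/-- The box of matrices with entries in `[0,1) × ∏ ℤ_p`. -/
def unitBoxMat (m n : ℕ) : Set ((Fin m → Fin n → ℝ) × ∀ i, Fin m → Fin n → ℚ_[p i]) :=
  {x | (∀ a b, 0 ≤ x.1 a b ∧ x.1 a b < 1) ∧ ∀ i a b, ‖x.2 i a b‖ ≤ 1}

theorem measurableSet_unitBoxVec [∀ i, MeasurableSpace ℚ_[p i]] [∀ i, BorelSpace ℚ_[p i]]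
    (k : ℕ) : MeasurableSet (unitBoxVec p k) := by
  simp only [unitBoxVec, Set.ofPred_and, Set.ofPred_forall]
  refine MeasurableSet.inter ?_ ?_
  · refine MeasurableSet.iInter fun a => ?_
    have h : Measurable fun x : (Fin k → ℝ) × (∀ i, Fin k → ℚ_[p i]) => x.1 a := by fun_prop
    exact (measurableSet_le measurable_const h).inter (measurableSet_lt h measurable_const)
  · refine MeasurableSet.iInter fun i => MeasurableSet.iInter fun a => ?_
    have h : Measurable fun x : (Fin k → ℝ) × (∀ i, Fin k → ℚ_[p i]) => x.2 i a := by fun_prop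
    exact measurableSet_le h.norm measurable_const

theorem measurableSet_unitBoxMat [∀ i, MeasurableSpace ℚ_[p i]] [∀ i, BorelSpace ℚ_[p i]]
    (m n : ℕ) : MeasurableSet (unitBoxMat p m n) := by
  simp only [unitBoxMat, Set.ofPred_and, Set.ofPred_forall]
  refine MeasurableSet.inter ?_ ?_
  · refine MeasurableSet.iInter fun a => MeasurableSet.iInter fun b => ?_
    have h : Measurable fun x : (Fin m → Fin n → ℝ) × (∀ i, Fin m → Fin n → ℚ_[p i]) =>
      x.1 a b := by fun_prop
    exact (measurableSet_le measurable_const h).inter (measurableSet_lt h measurable_const)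
  · refine MeasurableSet.iInter fun i => MeasurableSet.iInter fun a =>
      MeasurableSet.iInter fun b => ?_
    have h : Measurable fun x : (Fin m → Fin n → ℝ) × (∀ i, Fin m → Fin n → ℚ_[p i]) =>
      x.2 i a b := by fun_prop
    exact measurableSet_le h.norm measurable_const

theorem isCompact_closure_unitBoxVec (k : ℕ) : IsCompact (closure (unitBoxVec p k)) := by
  refine (Metric.isBounded_closedBall (x := 0) (r := 1)).subset (fun x hx => ?_)
    |>.isCompact_closure
  rw [mem_closedBall_zero_iff, Prod.norm_def, max_le_iff]
  refine ⟨(pi_norm_le_iff_of_nonneg zero_le_one).2 fun a => ?_,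
    (pi_norm_le_iff_of_nonneg zero_le_one).2 fun i =>
      (pi_norm_le_iff_of_nonneg zero_le_one).2 fun a => hx.2 i a⟩
  rw [Real.norm_eq_abs, abs_of_nonneg (hx.1 a).1]
  exact (hx.1 a).2.le

theorem isCompact_closure_unitBoxMat (m n : ℕ) : IsCompact (closure (unitBoxMat p m n)) := by
  refine (Metric.isBounded_closedBall (x := 0) (r := 1)).subset (fun x hx => ?_)
    |>.isCompact_closure
  rw [mem_closedBall_zero_iff, Prod.norm_def, max_le_iff]
  refine ⟨(pi_norm_le_iff_of_nonneg zero_le_one).2 fun a =>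
      (pi_norm_le_iff_of_nonneg zero_le_one).2 fun b => ?_,
    (pi_norm_le_iff_of_nonneg zero_le_one).2 fun i =>
      (pi_norm_le_iff_of_nonneg zero_le_one).2 fun a =>
        (pi_norm_le_iff_of_nonneg zero_le_one).2 fun b => hx.2 i a b⟩
  rw [Real.norm_eq_abs, abs_of_nonneg (hx.1 a b).1]
  exact (hx.1 a b).2.le

theorem interior_unitBoxVec_nonempty (k : ℕ) : (interior (unitBoxVec p k)).Nonempty := by
  refine ⟨(fun _ => 1 / 2, 0), ?_⟩
  rw [mem_interior_iff_mem_nhds]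
  have h : ∀ᶠ x : (Fin k → ℝ) × (∀ i, Fin k → ℚ_[p i]) in nhds (fun _ => 1 / 2, 0),
      (∀ a, x.1 a ∈ Set.Ioo (0 : ℝ) 1) ∧ ∀ i a, ‖x.2 i a‖ < 1 := by
    refine Filter.Eventually.and ?_ ?_
    · refine Filter.eventually_all.2 fun a => ?_
      have hc : Continuous fun x : (Fin k → ℝ) × (∀ i, Fin k → ℚ_[p i]) => x.1 a := by fun_prop
      exact hc.continuousAt.eventually (Ioo_mem_nhds (by norm_num) (by norm_num))
    · refine Filter.eventually_all.2 fun i => Filter.eventually_all.2 fun a => ?_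
      have hc : Continuous fun x : (Fin k → ℝ) × (∀ i, Fin k → ℚ_[p i]) => ‖x.2 i a‖ := by
        fun_prop
      exact hc.continuousAt.eventually (gt_mem_nhds (by simp))
  filter_upwards [h] with x hx
  exact ⟨fun a => ⟨(hx.1 a).1.le, (hx.1 a).2⟩, fun i a => (hx.2 i a).le⟩

theorem eq_of_add_diagVec_mem_unitBoxVec {k : ℕ} (x : (Fin k → ℝ) × ∀ i, Fin k → ℚ_[p i])
    (u v : zsVec p k) (hu : x + diagVec p k u ∈ unitBoxVec p k)
    (hv : x + diagVec p k v ∈ unitBoxVec p k) : u = v := by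
  rw [add_comm] at hu hv
  ext a
  exact IsZS.eq_of_add_mem p (u.2 a) (v.2 a) (hu.1 a) (hv.1 a) (fun i => hu.2 i a)
    (fun i => hv.2 i a)

theorem isAddFundamentalDomain_unitBoxMat (hp : Function.Injective p)
    [∀ i, MeasurableSpace ℚ_[p i]] [∀ i, BorelSpace ℚ_[p i]] (m n : ℕ)
    (κ : Measure ((Fin m → Fin n → ℝ) × ∀ i, Fin m → Fin n → ℚ_[p i])) :
    IsAddFundamentalDomain ((zsMat p m n).map (diagMat p m n)) (unitBoxMat p m n) κ := by
  refine IsAddFundamentalDomain.mk' (measurableSet_unitBoxMat p m n).nullMeasurableSet fun x => ?_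
  choose z hz hzr hzx using fun a b =>
    exists_isZS_add_mem p hp (x.1 a b) (fun i => x.2 i a b)
  refine ⟨⟨diagMat p m n z, AddSubgroup.mem_map_of_mem _ hz⟩, ⟨hzr, fun i a b => hzx a b i⟩, ?_⟩
  rintro ⟨_, w, hw, rfl⟩ h
  refine Subtype.ext (congrArg (diagMat p m n) (funext fun a => funext fun b => ?_))
  exact IsZS.eq_of_add_mem p (hw a b) (hz a b) (h.1 a b) (hzr a b) (fun i => h.2 i a b)
    (hzx a b)

/-- The homomorphism `A ↦ A q` from `Mat_{m,n}(ℚ_S)` to `ℚ_S^m`. -/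
noncomputable def mulVecHom (m : ℕ) {n : ℕ} (q : Fin n → ℚ) :
    ((Fin m → Fin n → ℝ) × ∀ i, Fin m → Fin n → ℚ_[p i]) →+
      (Fin m → ℝ) × ∀ i, Fin m → ℚ_[p i] where
  toFun A := (fun a => ∑ b, A.1 a b * (q b : ℝ), fun i a => ∑ b, A.2 i a b * (q b : ℚ_[p i]))
  map_zero' := by ext <;> simp
  map_add' A B := by ext <;> simp [add_mul, Finset.sum_add_distrib]

theorem continuous_mulVecHom (m : ℕ) {n : ℕ} (q : Fin n → ℚ) : Continuous (mulVecHom p m q) := by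
  change Continuous fun A : (Fin m → Fin n → ℝ) × (∀ i, Fin m → Fin n → ℚ_[p i]) =>
    ((fun a => ∑ b, A.1 a b * (q b : ℝ), fun i a => ∑ b, A.2 i a b * (q b : ℚ_[p i])) :
      (Fin m → ℝ) × ∀ i, Fin m → ℚ_[p i])
  fun_prop

theorem mulVecHom_surjective (m : ℕ) {n : ℕ} {q : Fin n → ℚ} (hq : q ≠ 0) :
    Function.Surjective (mulVecHom p m q) := by
  obtain ⟨c, hc⟩ := Function.ne_iff.1 hq
  intro x
  refine ⟨(fun a b => if b = c then x.1 a / q c else 0,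
    fun i a b => if b = c then x.2 i a / (q c : ℚ_[p i]) else 0), ?_⟩
  have h1 : (q c : ℝ) ≠ 0 := by exact_mod_cast hc
  have h2 : ∀ i, (q c : ℚ_[p i]) ≠ 0 := fun i => by exact_mod_cast hc
  ext <;> simp [mulVecHom, h1, h2]

/-- The product of an `S`-integral matrix and an `S`-integral vector. -/
def zsMulVec {m n : ℕ} (C : Fin m → Fin n → ℚ) (q : Fin n → ℚ) : Fin m → ℚ :=
  fun a => ∑ b, C a b * q b

theorem zsMulVec_mem {m n : ℕ} {C : Fin m → Fin n → ℚ} (hC : C ∈ zsMat p m n) {q : Fin n → ℚ}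
    (hq : q ∈ zsVec p n) : zsMulVec C q ∈ zsVec p m := fun a =>
  IsZS.sum (prod_primes_ne_zero p) _ fun b _ => (hC a b).mul (hq b)

theorem mulVecHom_diagMat {m n : ℕ} (C : Fin m → Fin n → ℚ) (q : Fin n → ℚ) :
    mulVecHom p m q (diagMat p m n C) = diagVec p m (zsMulVec C q) := by
  ext <;> simp [mulVecHom, diagMat, diagVec, zsMulVec, ratR, ratP]

/-- The average over `A` in the unit box of the number of `u ∈ ℤ_S^m` with `A q + u ∈ E` is at most
a constant multiple of the volume of `E`. -/
theorem tsum_measure_mulVecHom_le (hp : Function.Injective p)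
    [∀ i, MeasurableSpace ℚ_[p i]] [∀ i, BorelSpace ℚ_[p i]] (m n : ℕ)
    (κ : Measure ((Fin m → Fin n → ℝ) × ∀ i, Fin m → Fin n → ℚ_[p i])) [κ.IsAddHaarMeasure]
    (ξ : Measure ((Fin m → ℝ) × ∀ i, Fin m → ℚ_[p i])) [ξ.IsAddHaarMeasure]
    {q : Fin n → ℚ} (hq : q ∈ zsVec p n) (hq0 : q ≠ 0)
    {E : Set ((Fin m → ℝ) × ∀ i, Fin m → ℚ_[p i])} (hEm : MeasurableSet E)
    (hEc : IsCompact (closure E)) :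
    (∑' u : zsVec p m, κ (unitBoxMat p m n ∩ {A | mulVecHom p m q A + diagVec p m u ∈ E})) *
      ξ (unitBoxVec p m) ≤ κ (unitBoxMat p m n) * ξ E := by
  have hcount : Countable ((zsMat p m n).map (diagMat p m n)) :=
    ((Set.to_countable _).image _).to_subtype
  have hsc : ∀ i, SecondCountableTopology ℚ_[p i] := fun i => secondCountable_of_proper
  refine tsum_measure_translate_preimage_mul_le κ ξ _
    (isAddFundamentalDomain_unitBoxMat p hp m n κ)
    ((measure_mono subset_closure).trans_lt
      (isCompact_closure_unitBoxMat p m n).measure_lt_top).ne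
    ((diagVec p m).comp (zsVec p m).subtype) (mulVecHom p m q) (continuous_mulVecHom p m q)
    (mulVecHom_surjective p m hq0) ?_ (measurableSet_unitBoxVec p m)
    (interior_unitBoxVec_nonempty p m) (isCompact_closure_unitBoxVec p m)
    (fun x u v hu hv => eq_of_add_diagVec_mem_unitBoxVec p x u v hu hv) hEm hEc
  rintro _ ⟨C, hC, rfl⟩
  exact ⟨⟨_, zsMulVec_mem p hC hq⟩, mulVecHom_diagMat p C q⟩

end Boxes

section Volumes

/-- The unit ball of `ℚ_q^m` contains `q^{km}` disjoint translates of the ball of radius `q^{-k}`. -/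
theorem Padic.measure_pi_ball_mul_le (q : ℕ) [Fact q.Prime] [MeasurableSpace ℚ_[q]]
    [BorelSpace ℚ_[q]] {m : ℕ} (η : Measure (Fin m → ℚ_[q])) [η.IsAddHaarMeasure] (k : ℕ) :
    η {x | ‖x‖ ≤ (q : ℝ) ^ (-k : ℤ)} * ((q : ENNReal) ^ k) ^ m ≤ η {x | ‖x‖ ≤ 1} := by
  have hsc : SecondCountableTopology ℚ_[q] := secondCountable_of_proper
  have hq1 : (1 : ℝ) < q := by exact_mod_cast (Fact.out : q.Prime).one_lt
  set B : Set (Fin m → ℚ_[q]) := {x | ‖x‖ ≤ (q : ℝ) ^ (-k : ℤ)} with hB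
  have hBm : MeasurableSet B := (isClosed_le continuous_norm continuous_const).measurableSet
  let τ : (Fin m → Fin (q ^ k)) → Fin m → ℚ_[q] := fun c a => ((c a : ℕ) : ℚ_[q])
  have hr : (q : ℝ) ^ (-k : ℤ) ≤ 1 := zpow_le_one_of_nonpos₀ hq1.le (by simp)
  have hτ : ∀ c, ‖τ c‖ ≤ 1 := fun c => (pi_norm_le_iff_of_nonneg zero_le_one).2 fun a => by
    exact_mod_cast Padic.norm_int_le_one (p := q) ((c a : ℕ) : ℤ)
  have hdisj : Pairwise (Function.onFun Disjoint fun c => (fun x => -τ c + x) ⁻¹' B) := by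
    intro c d hcd
    refine Set.disjoint_left.2 fun x hxc hxd => hcd (funext fun a => ?_)
    have hxc' := (norm_le_pi_norm (-τ c + x) a).trans hxc
    have hxd' := (norm_le_pi_norm (-τ d + x) a).trans hxd
    have h : ‖(((c a : ℕ) - (d a : ℕ) : ℤ) : ℚ_[q])‖ ≤ (q : ℝ) ^ (-k : ℤ) := by
      have e : (((c a : ℕ) - (d a : ℕ) : ℤ) : ℚ_[q]) = (-τ d + x) a + -((-τ c + x) a) := by
        simp [τ, sub_eq_neg_add]
      rw [e]
      exact (Padic.nonarchimedean _ _).trans (max_le hxd' (by rwa [norm_neg]))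
    rw [Padic.norm_int_le_pow_iff_dvd] at h
    have hc := (c a).2
    have hd := (d a).2
    refine Fin.ext ?_
    have := Int.eq_zero_of_abs_lt_dvd h (by
      rw [abs_lt]
      constructor <;> zify at hc hd <;>
        linarith [Int.natCast_nonneg (c a : ℕ), Int.natCast_nonneg (d a : ℕ)])
    omega
  have hsub : (⋃ c, (fun x => -τ c + x) ⁻¹' B) ⊆ {x | ‖x‖ ≤ 1} := by
    refine Set.iUnion_subset fun c x hx => ?_
    have hx' : ‖-τ c + x‖ ≤ 1 := le_trans hx hr
    refine (pi_norm_le_iff_of_nonneg zero_le_one).2 fun a => ?_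
    have e : x a = τ c a + (-τ c + x) a := by simp
    rw [e]
    exact (Padic.nonarchimedean _ _).trans
      (max_le ((norm_le_pi_norm _ a).trans (hτ c)) ((norm_le_pi_norm _ a).trans hx'))
  calc η B * ((q : ENNReal) ^ k) ^ m
      = ∑' c : Fin m → Fin (q ^ k), η ((fun x => -τ c + x) ⁻¹' B) := by
        simp_rw [measure_preimage_add]
        simp [tsum_fintype, mul_comm]
    _ = η (⋃ c, (fun x => -τ c + x) ⁻¹' B) :=
        (measure_iUnion hdisj fun c => (measurable_const_add _) hBm).symm
    _ ≤ _ := measure_mono hsub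

theorem Padic.measure_pi_norm_pow_le (q : ℕ) [Fact q.Prime] [MeasurableSpace ℚ_[q]]
    [BorelSpace ℚ_[q]] {m : ℕ} (hm : 0 < m) (η : Measure (Fin m → ℚ_[q])) [η.IsAddHaarMeasure]
    {l : ℤ} (hl : (q : ℝ) ^ (m * l : ℤ) ≤ 1) :
    η {x | ‖x‖ ^ m ≤ (q : ℝ) ^ (m * l : ℤ)} ≤
      ENNReal.ofReal ((q : ℝ) ^ (m * l : ℤ)) * η {x | ‖x‖ ≤ 1} := by
  have hq1 : (1 : ℝ) < q := by exact_mod_cast (Fact.out : q.Prime).one_lt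
  have hl0 : l ≤ 0 := by
    by_contra! h
    exact absurd hl (not_le.2 (one_lt_zpow₀ hq1 (by positivity)))
  obtain ⟨k, rfl⟩ : ∃ k : ℕ, l = -k := ⟨l.natAbs, by omega⟩
  have e : (q : ℝ) ^ (m * (-k : ℤ) : ℤ) = ((q : ℝ) ^ (-k : ℤ)) ^ m := by
    rw [mul_comm, _root_.zpow_mul, zpow_natCast]
  have hset : {x : Fin m → ℚ_[q] | ‖x‖ ^ m ≤ (q : ℝ) ^ (m * (-k : ℤ) : ℤ)}
      = {x | ‖x‖ ≤ (q : ℝ) ^ (-k : ℤ)} := by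
    ext x
    simp only [Set.mem_ofPred_eq, e]
    exact pow_le_pow_iff_left₀ (norm_nonneg _) (by positivity) hm.ne'
  have hqk : ((q : ENNReal) ^ k) ^ m ≠ 0 := by
    have : (q : ENNReal) ≠ 0 := by exact_mod_cast (Fact.out : q.Prime).ne_zero
    positivity
  have hqt : ((q : ENNReal) ^ k) ^ m ≠ ⊤ := by finiteness
  rw [hset]
  have h := Padic.measure_pi_ball_mul_le q η k
  rw [← ENNReal.le_div_iff_mul_le (Or.inl hqk) (Or.inl hqt)] at h
  refine h.trans (le_of_eq ?_)
  rw [e, _root_.zpow_neg, zpow_natCast, ← inv_pow, ENNReal.ofReal_pow (by positivity),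
    inv_pow, ENNReal.ofReal_inv_of_pos (by positivity), ENNReal.ofReal_pow (by positivity),
    ENNReal.ofReal_natCast, div_eq_mul_inv, mul_comm, ENNReal.inv_pow]

theorem Real.volume_pi_norm_pow_le {m : ℕ} (hm : 0 < m) {r : ℝ} (hr : 0 ≤ r) :
    volume {x : Fin m → ℝ | ‖x‖ ^ m ≤ r} = 2 ^ m * ENNReal.ofReal r := by
  have hset : {x : Fin m → ℝ | ‖x‖ ^ m ≤ r} = Metric.closedBall 0 (r ^ (m⁻¹ : ℝ)) := by
    ext x
    rw [Set.mem_ofPred_eq, mem_closedBall_zero_iff, Real.le_rpow_inv_iff_of_pos (norm_nonneg _) hr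
      (by exact_mod_cast hm), Real.rpow_natCast]
  rw [hset, Real.volume_pi_closedBall _ (by positivity), Fintype.card_fin, mul_pow,
    Real.rpow_inv_natCast_pow hr hm.ne', ENNReal.ofReal_mul (by positivity)]
  simp [ENNReal.ofReal_pow]

end Volumes

section Approx

variable {m n s : ℕ} {p : Fin s → ℕ} (ψ : ApproxFamily m n s p)

theorem ApproxFamily.psiR_le_one (t : ℝ) : ψ.psiR t ≤ 1 := by
  rcases le_total t 1 with h | h
  · exact (ψ.oneR h).le
  · exact (ψ.antiR one_pos h).trans (ψ.oneR le_rfl).le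

theorem ApproxFamily.psiP_le_one (i : Fin s) (t : ℝ) : ψ.psiP i t ≤ 1 := by
  rcases le_total t 1 with h | h
  · exact (ψ.oneP i h).le
  · exact (ψ.antiP i one_pos h).trans (ψ.oneP i le_rfl).le

theorem ApproxFamily.psiR_pow_le {a b : ℝ} (hb : 0 ≤ b) (hba : b ≤ max a 1) :
    ψ.psiR (a ^ n) ≤ ψ.psiR (b ^ n) := by
  rcases le_total b 1 with h | h
  · rw [ψ.oneR (pow_le_one₀ hb h)]
    exact ψ.psiR_le_one _
  · have hb0 : 0 < b := one_pos.trans_le h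
    rcases le_max_iff.1 hba with h' | h'
    · exact ψ.antiR (by positivity) (by gcongr)
    · rw [ψ.oneR (t := b ^ n) (pow_le_one₀ hb h')]
      exact ψ.psiR_le_one _

theorem ApproxFamily.psiP_pow_le (i : Fin s) {a b : ℝ} (hb : 0 ≤ b) (hba : b ≤ max a 1) :
    ψ.psiP i (a ^ n) ≤ ψ.psiP i (b ^ n) := by
  rcases le_total b 1 with h | h
  · rw [ψ.oneP i (pow_le_one₀ hb h)]
    exact ψ.psiP_le_one i _
  · have hb0 : 0 < b := one_pos.trans_le h
    rcases le_max_iff.1 hba with h' | h'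
    · exact ψ.antiP i (by positivity) (by gcongr)
    · rw [ψ.oneP i (t := b ^ n) (pow_le_one₀ hb h')]
      exact ψ.psiP_le_one i _

variable [∀ i, Fact (p i).Prime]

theorem ApproxFamily.exists_psiP_eq_zpow (hn : 0 < n) (i : Fin s) (q : Fin n → ℚ) :
    ∃ l : ℤ, ψ.psiP i (‖ratP p i q‖ ^ n) = (p i : ℝ) ^ (m * l : ℤ) := by
  rcases eq_or_ne (ratP p i q) 0 with h0 | h0
  · exact ⟨0, by rw [h0, norm_zero, zero_pow hn.ne', ψ.oneP i zero_le_one]; simp⟩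
  · have : Nonempty (Fin n) := ⟨⟨0, hn⟩⟩
    obtain ⟨b, hb⟩ := Finite.exists_max fun b => ‖ratP p i q b‖
    have hnorm : ‖ratP p i q‖ = ‖ratP p i q b‖ :=
      le_antisymm ((pi_norm_le_iff_of_nonneg (norm_nonneg _)).2 hb) (norm_le_pi_norm _ b)
    have hb0 : ratP p i q b ≠ 0 := by
      rw [← norm_ne_zero_iff, ← hnorm]
      exact norm_ne_zero_iff.2 h0
    obtain ⟨l, hl⟩ := ψ.valsP i (-(ratP p i q b).valuation * n)
    refine ⟨l, ?_⟩
    rw [hnorm, Padic.norm_eq_zpow_neg_valuation hb0, ← zpow_natCast, ← _root_.zpow_mul, hl]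

/-- The set of `x ∈ ℚ_S^m` satisfying `‖x‖_p^m ≤ ψ_p(‖q‖_p^n)` for all `p ∈ S`. -/
def ApproxFamily.target (ψ : ApproxFamily m n s p) (q : Fin n → ℚ) :
    Set ((Fin m → ℝ) × ∀ i, Fin m → ℚ_[p i]) :=
  {x | ‖x.1‖ ^ m ≤ ψ.psiR (‖ratR q‖ ^ n)} ∩
    {x | ∀ i, ‖x.2 i‖ ^ m ≤ ψ.psiP i (‖ratP p i q‖ ^ n)}

theorem ApproxFamily.isClosed_target (q : Fin n → ℚ) : IsClosed (ψ.target q) := by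
  refine IsClosed.inter (isClosed_le (by fun_prop) continuous_const) ?_
  rw [Set.ofPred_forall]
  exact isClosed_iInter fun i => isClosed_le (by fun_prop) continuous_const

theorem ApproxFamily.norm_le_one_of_mem_target (hm : 0 < m) {q : Fin n → ℚ}
    {x : (Fin m → ℝ) × ∀ i, Fin m → ℚ_[p i]} (hx : x ∈ ψ.target q) : ‖x‖ ≤ 1 := by
  rw [Prod.norm_def, max_le_iff, pi_norm_le_iff_of_nonneg (x := x.2) zero_le_one]
  exact ⟨(pow_le_one_iff_of_nonneg (norm_nonneg _) hm.ne').1 (hx.1.trans (ψ.psiR_le_one _)),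
    fun i => (pow_le_one_iff_of_nonneg (norm_nonneg _) hm.ne').1
      ((hx.2 i).trans (ψ.psiP_le_one i _))⟩

theorem ApproxFamily.isCompact_target (hm : 0 < m) (q : Fin n → ℚ) : IsCompact (ψ.target q) :=
  Metric.isCompact_of_isClosed_isBounded (ψ.isClosed_target q)
    ((Metric.isBounded_closedBall (x := 0) (r := 1)).subset fun _ hx =>
      mem_closedBall_zero_iff.2 (ψ.norm_le_one_of_mem_target hm hx))

/-- The function `y ↦ ∏_{p ∈ S} ψ_p(‖y‖_p^n)` on `ℚ_S^n`. -/
noncomputable def ApproxFamily.weight (ψ : ApproxFamily m n s p)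
    (y : (Fin n → ℝ) × ∀ i, Fin n → ℚ_[p i]) : ENNReal :=
  ENNReal.ofReal (ψ.psiR (‖y.1‖ ^ n) * ∏ i, ψ.psiP i (‖y.2 i‖ ^ n))

theorem ApproxFamily.measure_target_le [∀ i, MeasurableSpace ℚ_[p i]]
    [∀ i, BorelSpace ℚ_[p i]] (hm : 0 < m) (hn : 0 < n)
    (η : ∀ i, Measure (Fin m → ℚ_[p i])) [∀ i, (η i).IsAddHaarMeasure] (q : Fin n → ℚ) :
    (volume : Measure (Fin m → ℝ)).prod (Measure.pi η) (ψ.target q) ≤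
      (2 ^ m * ∏ i, η i {x | ‖x‖ ≤ 1}) * ψ.weight (diagVec p n q) := by
  have hsc : ∀ i, SecondCountableTopology ℚ_[p i] := fun i => secondCountable_of_proper
  have hset : ψ.target q = {x : Fin m → ℝ | ‖x‖ ^ m ≤ ψ.psiR (‖ratR q‖ ^ n)} ×ˢ
      Set.pi Set.univ fun i => {x | ‖x‖ ^ m ≤ ψ.psiP i (‖ratP p i q‖ ^ n)} := by
    ext x
    simp [ApproxFamily.target]
  rw [hset, Measure.prod_prod, Measure.pi_pi, Real.volume_pi_norm_pow_le hm (ψ.posR _).le,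
    ApproxFamily.weight, ENNReal.ofReal_mul (ψ.posR _).le,
    ENNReal.ofReal_prod_of_nonneg fun i _ => (ψ.posP i _).le]
  calc _ ≤ 2 ^ m * ENNReal.ofReal (ψ.psiR (‖ratR q‖ ^ n)) *
        ∏ i, ENNReal.ofReal (ψ.psiP i (‖ratP p i q‖ ^ n)) * η i {x | ‖x‖ ≤ 1} := by
        gcongr with i
        obtain ⟨l, hl⟩ := ψ.exists_psiP_eq_zpow hn i q
        have h1 := ψ.psiP_le_one i (‖ratP p i q‖ ^ n)
        rw [hl] at h1 ⊢
        exact Padic.measure_pi_norm_pow_le (p i) hm (η i) h1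
    _ = _ := by
        rw [Finset.prod_mul_distrib]
        simp only [diagVec, AddMonoidHom.coe_mk, ZeroHom.coe_mk]
        ring

end Approx

section SumIntegral

variable {m n s : ℕ} {p : Fin s → ℕ} [∀ i, Fact (p i).Prime] (ψ : ApproxFamily m n s p)

theorem ApproxFamily.weight_le_weight {y z : (Fin n → ℝ) × ∀ i, Fin n → ℚ_[p i]}
    (hR : ‖z.1‖ ≤ max ‖y.1‖ 1) (hP : ∀ i, ‖z.2 i‖ ≤ max ‖y.2 i‖ 1) :
    ψ.weight y ≤ ψ.weight z := by
  refine ENNReal.ofReal_le_ofReal (mul_le_mul (ψ.psiR_pow_le (norm_nonneg _) hR)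
    (Finset.prod_le_prod (fun i _ => (ψ.posP i _).le) fun i _ =>
      ψ.psiP_pow_le i (norm_nonneg _) (hP i))
    (Finset.prod_nonneg fun i _ => (ψ.posP i _).le) (ψ.posR _).le)

/-- The vector of `ℚ_S^k` whose real component has entries `0` and `1` as prescribed by `t`, and
whose other components vanish. -/
noncomputable def realShift (p : Fin s → ℕ) [∀ i, Fact (p i).Prime] {k : ℕ} (t : Fin k → Bool) :
    (Fin k → ℝ) × ∀ i, Fin k → ℚ_[p i] :=
  (fun j => if t j then 1 else 0, 0)

theorem ApproxFamily.weight_diagVec_le (q : Fin n → ℚ)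
    {y : (Fin n → ℝ) × ∀ i, Fin n → ℚ_[p i]}
    (hy : realShift p (fun j => decide (0 ≤ q j)) - diagVec p n q + y ∈ unitBoxVec p n) :
    ψ.weight (diagVec p n q) ≤ ψ.weight y := by
  refine ψ.weight_le_weight ?_ fun i => ?_
  · refine (pi_norm_le_iff_of_nonneg (by positivity)).2 fun j => ?_
    have h1 := (hy.1 j).1
    have h2 := (hy.1 j).2
    have h3 : |(q j : ℝ)| ≤ ‖(diagVec p n q).1‖ := norm_le_pi_norm (diagVec p n q).1 j
    simp only [realShift, diagVec, ratR, AddMonoidHom.coe_mk, ZeroHom.coe_mk, Prod.fst_add,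
      Prod.fst_sub, Pi.add_apply, Pi.sub_apply, decide_eq_true_eq] at h1 h2
    have h4 : |y.1 j| ≤ max |(q j : ℝ)| 1 := by
      split_ifs at h1 h2 with hq
      · have hq' : (0 : ℝ) ≤ q j := by exact_mod_cast hq
        rw [abs_of_nonneg hq', abs_le, le_max_iff]
        refine ⟨?_, Or.inl (by linarith)⟩
        linarith [le_max_right (q j : ℝ) 1]
      · have hq' : (q j : ℝ) < 0 := by exact_mod_cast not_le.1 hq
        rw [abs_of_neg hq', abs_le, le_max_iff]
        refine ⟨?_, Or.inr (by linarith)⟩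
        linarith [le_max_left (-q j : ℝ) 1]
    exact h4.trans (max_le_max h3 le_rfl)
  · refine (pi_norm_le_iff_of_nonneg (by positivity)).2 fun j => ?_
    have e : y.2 i j = (diagVec p n q).2 i j +
        (realShift p (fun j => decide (0 ≤ q j)) - diagVec p n q + y).2 i j := by
      simp [realShift]
    rw [e]
    exact (Padic.nonarchimedean _ _).trans
      (max_le_max (norm_le_pi_norm ((diagVec p n q).2 i) j) (hy.2 i j))

/-- The sum of `∏ ψ_p(‖q‖_p^n)` over `q ∈ ℤ_S^n` is controlled by the corresponding integral. -/
theorem ApproxFamily.tsum_weight_mul_le [∀ i, MeasurableSpace ℚ_[p i]]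
    [∀ i, BorelSpace ℚ_[p i]] (μ : Measure ((Fin n → ℝ) × ∀ i, Fin n → ℚ_[p i]))
    [μ.IsAddLeftInvariant] :
    (∑' q : zsVec p n, ψ.weight (diagVec p n q)) * μ (unitBoxVec p n) ≤
      2 ^ n * ∫⁻ y, ψ.weight y ∂μ := by
  have hsc : ∀ i, SecondCountableTopology ℚ_[p i] := fun i => secondCountable_of_proper
  let S : (Fin n → Bool) → zsVec p n → Set ((Fin n → ℝ) × ∀ i, Fin n → ℚ_[p i]) := fun t q =>
    (fun y => (realShift p t - diagVec p n q) + y) ⁻¹' unitBoxVec p n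
  have hSm : ∀ t q, MeasurableSet (S t q) := fun t q =>
    (measurable_const_add _) (measurableSet_unitBoxVec p n)
  have hdisj : ∀ t, Pairwise (Function.onFun Disjoint (S t)) := by
    intro t u v huv
    refine Set.disjoint_left.2 fun y hu hv => huv (neg_injective ?_)
    have e : ∀ w : zsVec p n, realShift p t - diagVec p n w + y
        = (realShift p t + y) + diagVec p n (-w : zsVec p n) := fun w => by
      push_cast
      rw [map_neg]
      abel
    refine eq_of_add_diagVec_mem_unitBoxVec p (realShift p t + y) _ _ ?_ ?_
    · rw [← e]; exact hu
    · rw [← e]; exact hv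
  rw [← ENNReal.tsum_mul_right]
  calc ∑' q : zsVec p n, ψ.weight (diagVec p n q) * μ (unitBoxVec p n)
      ≤ ∑' q : zsVec p n, ∑ t, ∫⁻ y in S t q, ψ.weight y ∂μ := by
        refine ENNReal.tsum_le_tsum fun q => ?_
        set t : Fin n → Bool := fun j => decide (0 ≤ (q : Fin n → ℚ) j) with ht
        calc ψ.weight (diagVec p n q) * μ (unitBoxVec p n)
            = ∫⁻ _ in S t q, ψ.weight (diagVec p n q) ∂μ := by
              rw [setLIntegral_const, measure_preimage_add]
          _ ≤ ∫⁻ y in S t q, ψ.weight y ∂μ :=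
              setLIntegral_mono' (hSm t q) fun y hy => ψ.weight_diagVec_le q hy
          _ ≤ _ := Finset.single_le_sum (f := fun t => ∫⁻ y in S t q, ψ.weight y ∂μ)
              (fun _ _ => zero_le) (Finset.mem_univ t)
    _ = ∑ t, ∑' q : zsVec p n, ∫⁻ y in S t q, ψ.weight y ∂μ :=
        Summable.tsum_finsetSum fun _ _ => ENNReal.summable
    _ ≤ ∑ _t : Fin n → Bool, ∫⁻ y, ψ.weight y ∂μ := by
        refine Finset.sum_le_sum fun t _ => ?_
        rw [← lintegral_iUnion (hSm t) (hdisj t)]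
        exact setLIntegral_le_lintegral _ _
    _ = 2 ^ n * ∫⁻ y, ψ.weight y ∂μ := by simp

end SumIntegral

section Solutions

variable {m n s : ℕ} {p : Fin s → ℕ} [∀ i, Fact (p i).Prime] (ψ : ApproxFamily m n s p)

/-- The pairs `(u, q) ∈ ℤ_S^m × ℤ_S^n` with `‖A q + u‖_p^m ≤ ψ_p(‖q‖_p^n)` for all `p ∈ S`. -/
def ApproxFamily.solutions (ψ : ApproxFamily m n s p)
    (A : (Fin m → Fin n → ℝ) × ∀ i, Fin m → Fin n → ℚ_[p i]) : Set (zsVec p m × zsVec p n) :=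
  {uq | mulVecHom p m uq.2 A + diagVec p m uq.1 ∈ ψ.target uq.2}

theorem ApproxFamily.finite_solutions_diagMat_add
    (A : (Fin m → Fin n → ℝ) × ∀ i, Fin m → Fin n → ℚ_[p i])
    {C : Fin m → Fin n → ℚ} (hC : C ∈ zsMat p m n) (h : (ψ.solutions A).Finite) :
    (ψ.solutions (diagMat p m n C + A)).Finite := by
  let f : zsVec p m × zsVec p n → zsVec p m × zsVec p n := fun uq =>
    (uq.1 + ⟨zsMulVec C uq.2, zsMulVec_mem p hC uq.2.2⟩, uq.2)
  have hf : Function.Injective f := by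
    rintro ⟨u, q⟩ ⟨u', q'⟩ h
    obtain ⟨h1, rfl⟩ := Prod.mk.inj h
    exact Prod.ext (add_right_cancel h1) rfl
  refine (h.preimage (f := f) hf.injOn).subset fun uq huq => ?_
  have e : mulVecHom p m uq.2 (diagMat p m n C + A) + diagVec p m uq.1
      = mulVecHom p m (f uq).2 A + diagVec p m (f uq).1 := by
    simp only [f, map_add, AddSubgroup.coe_add, mulVecHom_diagMat]
    abel
  change mulVecHom p m (f uq).2 A + diagVec p m (f uq).1 ∈ ψ.target (f uq).2
  rw [← e]
  exact huq

theorem ApproxFamily.finite_solutions_zero (hm : 0 < m)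
    (A : (Fin m → Fin n → ℝ) × ∀ i, Fin m → Fin n → ℚ_[p i]) :
    {uq ∈ ψ.solutions A | uq.2 = 0}.Finite := by
  have hfin : (Set.pi Set.univ fun _ : Fin m => Set.Icc (-1 : ℤ) 1).Finite :=
    Set.Finite.pi fun _ => Set.finite_Icc _ _
  refine Set.Finite.of_finite_image
    (f := fun uq : zsVec p m × zsVec p n => ((uq.1 : Fin m → ℚ), uq.2)) ?_
    fun x _ y _ h => Prod.ext (Subtype.ext (Prod.mk.inj h).1) (Prod.mk.inj h).2
  refine ((hfin.image fun (z : Fin m → ℤ) a => (z a : ℚ)).prod (Set.finite_singleton 0)).subset ?_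
  rintro _ ⟨⟨u, q⟩, ⟨hu, rfl⟩, rfl⟩
  have h0 : mulVecHom p m ((0 : zsVec p n) : Fin n → ℚ) A = 0 := by
    ext <;> simp [mulVecHom]
  have hu' : diagVec p m u ∈ ψ.target (0 : zsVec p n) := by
    have := hu
    rw [ApproxFamily.solutions, Set.mem_ofPred_eq] at this
    rwa [h0, zero_add] at this
  have hnorm := ψ.norm_le_one_of_mem_target hm hu'
  have hR : ∀ a, |((u : Fin m → ℚ) a : ℝ)| ≤ 1 := fun a =>
    (norm_le_pi_norm (diagVec p m u).1 a).trans ((norm_fst_le _).trans hnorm)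
  have hP : ∀ i a, ‖((u : Fin m → ℚ) a : ℚ_[p i])‖ ≤ 1 := fun i a =>
    (norm_le_pi_norm ((diagVec p m u).2 i) a).trans ((norm_le_pi_norm (diagVec p m u).2 i).trans
      ((norm_snd_le _).trans hnorm))
  choose z hz using fun a => (u.2 a).exists_int_eq p fun i => hP i a
  refine ⟨⟨z, fun a _ => ?_, funext fun a => (hz a).symm⟩, rfl⟩
  have := hR a
  rw [hz a, Rat.cast_intCast] at this
  exact abs_le.1 (by exact_mod_cast this)

variable [∀ i, MeasurableSpace ℚ_[p i]]

theorem measure_unitBoxVec_ne_zero {k : ℕ} (ρ : Measure ((Fin k → ℝ) × ∀ i, Fin k → ℚ_[p i]))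
    [ρ.IsAddHaarMeasure] : ρ (unitBoxVec p k) ≠ 0 :=
  (Measure.measure_pos_of_nonempty_interior ρ (interior_unitBoxVec_nonempty p k)).ne'

theorem measure_unitBoxVec_ne_top {k : ℕ} (ρ : Measure ((Fin k → ℝ) × ∀ i, Fin k → ℚ_[p i]))
    [ρ.IsAddHaarMeasure] : ρ (unitBoxVec p k) ≠ ⊤ :=
  ((measure_mono subset_closure).trans_lt (isCompact_closure_unitBoxVec p k).measure_lt_top).ne

variable [∀ i, BorelSpace ℚ_[p i]]

theorem ApproxFamily.tsum_weight_ne_top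
    (μ : Measure ((Fin n → ℝ) × ∀ i, Fin n → ℚ_[p i])) [μ.IsAddHaarMeasure]
    (hint : ∫⁻ y, ψ.weight y ∂μ < ⊤) : ∑' q : zsVec p n, ψ.weight (diagVec p n q) ≠ ⊤ := by
  intro h
  have := (ψ.tsum_weight_mul_le μ).trans_lt (ENNReal.mul_lt_top (by finiteness) hint)
  rw [h, ENNReal.top_mul (measure_unitBoxVec_ne_zero μ)] at this
  exact this.false

theorem ApproxFamily.exists_tsum_measure_le (hp : Function.Injective p) (hm : 0 < m) (hn : 0 < n)
    (κ : Measure ((Fin m → Fin n → ℝ) × ∀ i, Fin m → Fin n → ℚ_[p i])) [κ.IsAddHaarMeasure] :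
    ∃ c : ENNReal, c ≠ ⊤ ∧ ∀ q : zsVec p n, q ≠ 0 →
      ∑' u : zsVec p m, κ (unitBoxMat p m n ∩
        {A | mulVecHom p m q A + diagVec p m u ∈ ψ.target q}) ≤
      c * ψ.weight (diagVec p n q) := by
  have hsc : ∀ i, SecondCountableTopology ℚ_[p i] := fun i => secondCountable_of_proper
  obtain ⟨η, hη⟩ : ∃ η : ∀ i, Measure (Fin m → ℚ_[p i]), ∀ i, (η i).IsAddHaarMeasure :=
    ⟨fun i => Measure.addHaar, fun i => inferInstance⟩
  obtain ⟨ξ, hξ⟩ : ∃ ξ, ξ = (volume : Measure (Fin m → ℝ)).prod (Measure.pi η) := ⟨_, rfl⟩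
  have hξH : ξ.IsAddHaarMeasure := by
    rw [hξ]
    have := Measure.pi.isAddHaarMeasure η
    exact Measure.prod.instIsAddHaarMeasure _ _
  have hc : 2 ^ m * ∏ i, η i {x | ‖x‖ ≤ 1} ≠ ⊤ := by
    refine ENNReal.mul_ne_top (by finiteness) (ENNReal.prod_ne_top fun i _ => ?_)
    have : {x : Fin m → ℚ_[p i] | ‖x‖ ≤ 1} = Metric.closedBall 0 1 := by
      ext; simp
    rw [this]
    exact (isCompact_closedBall _ _).measure_lt_top.ne
  have hbox : κ (unitBoxMat p m n) ≠ ⊤ := ((measure_mono subset_closure).trans_lt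
    (isCompact_closure_unitBoxMat p m n).measure_lt_top).ne
  refine ⟨κ (unitBoxMat p m n) * (2 ^ m * ∏ i, η i {x | ‖x‖ ≤ 1}) / ξ (unitBoxVec p m),
    ENNReal.div_ne_top (ENNReal.mul_ne_top hbox hc) (measure_unitBoxVec_ne_zero ξ),
    fun q hq => ?_⟩
  have hle := tsum_measure_mulVecHom_le p hp m n κ ξ q.2 (fun h => hq (Subtype.ext h))
    (ψ.isClosed_target q).measurableSet (ψ.isCompact_target hm q).closure
  have hξle := ψ.measure_target_le hm hn η q
  rw [← hξ] at hξle
  rw [← ENNReal.le_div_iff_mul_le (Or.inl (measure_unitBoxVec_ne_zero ξ))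
    (Or.inl (measure_unitBoxVec_ne_top ξ))] at hle
  calc _ ≤ _ := hle
    _ ≤ κ (unitBoxMat p m n) * ((2 ^ m * ∏ i, η i {x | ‖x‖ ≤ 1}) * ψ.weight (diagVec p n q)) /
        ξ (unitBoxVec p m) := by gcongr
    _ = _ := by
      simp only [div_eq_mul_inv]
      ring

theorem ApproxFamily.ae_restrict_finite_solutions (hp : Function.Injective p) (hm : 0 < m)
    (hn : 0 < n)
    (κ : Measure ((Fin m → Fin n → ℝ) × ∀ i, Fin m → Fin n → ℚ_[p i])) [κ.IsAddHaarMeasure]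
    (hsum : ∑' q : zsVec p n, ψ.weight (diagVec p n q) ≠ ⊤) :
    ∀ᵐ A ∂κ.restrict (unitBoxMat p m n), (ψ.solutions A).Finite := by
  obtain ⟨c, hc, hcle⟩ := ψ.exists_tsum_measure_le hp hm hn κ
  have hbc := ae_finite_setOfPred_mem (μ := κ.restrict (unitBoxMat p m n))
    (s := fun uq : zsVec p m × zsVec p n =>
      {A | uq.2 ≠ 0 ∧ mulVecHom p m uq.2 A + diagVec p m uq.1 ∈ ψ.target uq.2}) (by
      rw [ENNReal.tsum_prod', ENNReal.tsum_comm]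
      refine ne_top_of_le_ne_top (b := ∑' q : zsVec p n, c * ψ.weight (diagVec p n q)) ?_
        (ENNReal.tsum_le_tsum fun q => ?_)
      · rw [ENNReal.tsum_mul_left]
        exact ENNReal.mul_ne_top hc hsum
      · rcases eq_or_ne q 0 with rfl | hq
        · simp
        · refine le_trans (le_of_eq (tsum_congr fun u => ?_)) (hcle q hq)
          rw [Measure.restrict_apply' (measurableSet_unitBoxMat p m n), Set.inter_comm]
          simp only [ne_eq, hq, not_false_eq_true, true_and])
  filter_upwards [hbc] with A hA
  refine (hA.union (ψ.finite_solutions_zero hm A)).subset fun uq huq => ?_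
  by_cases h : uq.2 = 0
  · exact Or.inr ⟨huq, h⟩
  · exact Or.inl ⟨h, huq⟩

theorem ApproxFamily.ae_finite_solutions (hp : Function.Injective p) (hm : 0 < m) (hn : 0 < n)
    (κ : Measure ((Fin m → Fin n → ℝ) × ∀ i, Fin m → Fin n → ℚ_[p i])) [κ.IsAddHaarMeasure]
    (hsum : ∑' q : zsVec p n, ψ.weight (diagVec p n q) ≠ ⊤) :
    ∀ᵐ A ∂κ, (ψ.solutions A).Finite := by
  have hsc : ∀ i, SecondCountableTopology ℚ_[p i] := fun i => secondCountable_of_proper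
  have hadd : MeasurableAdd ((Fin m → Fin n → ℝ) × ∀ i, Fin m → Fin n → ℚ_[p i]) :=
    ContinuousAdd.measurableAdd
  have hbox := ψ.ae_restrict_finite_solutions hp hm hn κ hsum
  rw [ae_iff, Measure.restrict_apply' (measurableSet_unitBoxMat p m n)] at hbox
  have hcount : Countable ((zsMat p m n).map (diagMat p m n)) :=
    ((Set.to_countable _).image _).to_subtype
  refine ae_iff.2 ((isAddFundamentalDomain_unitBoxMat p hp m n κ).measure_zero_of_invariant _
    ?_ hbox)
  rintro ⟨_, C, hC, rfl⟩
  ext A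
  rw [Set.mem_vadd_set_iff_neg_vadd_mem]
  refine not_congr ⟨fun h => ?_, fun h => ?_⟩
  · simpa [AddSubgroup.vadd_def] using ψ.finite_solutions_diagMat_add _ hC h
  · simpa [AddSubgroup.vadd_def] using ψ.finite_solutions_diagMat_add _ (neg_mem hC) h

end Solutions

/-- **Convergence case of the S-arithmetic Khintchine–Groshev theorem with
congruence conditions.** Assume `d = m + n ≥ 2`. If
`∫_{ℚ_S^n} ∏_{p ∈ S} ψ_p(‖y‖_p^n) dy < ∞`, then for Haar-almost every
`A ∈ Mat_{m,n}(ℚ_S)` there are only finitely many `(p⃗, q⃗) ∈ ℤ_S^m × ℤ_S^n` with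
`(p⃗, q⃗) ≡ (v_m, v_n) mod N` and `‖A_p q⃗ + p⃗‖_p^m ≤ ψ_p(‖q⃗‖_p^n)` for all `p ∈ S`. -/
theorem s_arithmetic_khintchine_groshev_convergence
    (m n : ℕ) (hm : 0 < m) (hn : 0 < n) (hd : 2 ≤ m + n)
    (s : ℕ) (p : Fin s → ℕ) [∀ i, Fact (p i).Prime] (hpinj : Function.Injective p)
    [∀ i, MeasurableSpace ℚ_[p i]] [∀ i, BorelSpace ℚ_[p i]]
    (ψ : ApproxFamily m n s p)
    (N : ℕ) (hN : 0 < N) (hNS : Nat.Coprime N (∏ i, p i))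
    (vm : Fin m → ℚ) (hvm : ∀ a, IsZS (∏ i, p i) (vm a))
    (vn : Fin n → ℚ) (hvn : ∀ b, IsZS (∏ i, p i) (vn b))
    -- Haar measure on `ℚ_S^n`, normalized so that `ℤ_p^n` has measure one at each
    -- finite place:
    (μ : ∀ i, Measure (Fin n → ℚ_[p i])) [∀ i, (μ i).IsAddHaarMeasure]
    (hμ : ∀ i, μ i {y | ∀ j, ‖y j‖ ≤ 1} = 1)
    -- Haar measure on `Mat_{m,n}(ℚ_S)`, normalized likewise:
    (ν : ∀ i, Measure (Fin m → Fin n → ℚ_[p i])) [∀ i, (ν i).IsAddHaarMeasure]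
    (hν : ∀ i, ν i {A | ∀ a b, ‖A a b‖ ≤ 1} = 1)
    -- convergence of the integral `∫_{ℚ_S^n} ∏_{p ∈ S} ψ_p(‖y‖_p^n) dy`:
    (hint : ∫⁻ y : (Fin n → ℝ) × (∀ i, Fin n → ℚ_[p i]),
        ENNReal.ofReal (ψ.psiR (‖y.1‖ ^ n) * ∏ i, ψ.psiP i (‖y.2 i‖ ^ n))
        ∂((volume : Measure (Fin n → ℝ)).prod (Measure.pi μ)) < ⊤) :
    ∀ᵐ A ∂((volume : Measure (Fin m → Fin n → ℝ)).prod (Measure.pi ν)),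
      {pq : (Fin m → ℚ) × (Fin n → ℚ) |
        (∀ a, IsZS (∏ i, p i) (pq.1 a)) ∧ (∀ b, IsZS (∏ i, p i) (pq.2 b)) ∧
        (∀ a, IsZS (∏ i, p i) ((pq.1 a - vm a) / N)) ∧
        (∀ b, IsZS (∏ i, p i) ((pq.2 b - vn b) / N)) ∧
        ‖fun a => (∑ b, A.1 a b * (pq.2 b : ℝ)) + (pq.1 a : ℝ)‖ ^ m
          ≤ ψ.psiR (‖ratR pq.2‖ ^ n) ∧
        ∀ i, ‖fun a => (∑ b, A.2 i a b * ((pq.2 b : ℚ) : ℚ_[p i])) + ((pq.1 a : ℚ) : ℚ_[p i])‖ ^ m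
          ≤ ψ.psiP i (‖ratP p i pq.2‖ ^ n)}.Finite := by
  have hsc : ∀ i, SecondCountableTopology ℚ_[p i] := fun i => secondCountable_of_proper
  have hμH := Measure.pi.isAddHaarMeasure μ
  have hνH := Measure.pi.isAddHaarMeasure ν
  have hvol : (volume : Measure (Fin m → Fin n → ℝ)).IsAddHaarMeasure :=
    Measure.pi.isAddHaarMeasure _
  have hμP := Measure.prod.instIsAddHaarMeasure (volume : Measure (Fin n → ℝ)) (Measure.pi μ)
  have hνP := Measure.prod.instIsAddHaarMeasure (volume : Measure (Fin m → Fin n → ℝ))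
    (Measure.pi ν)
  filter_upwards [ψ.ae_finite_solutions hpinj hm hn _ (ψ.tsum_weight_ne_top _ hint)] with A hA
  refine (hA.image fun uq => ((uq.1 : Fin m → ℚ), (uq.2 : Fin n → ℚ))).subset ?_
  rintro ⟨u, q⟩ ⟨hu, hq, -, -, hR, hP⟩
  exact ⟨(⟨u, hu⟩, ⟨q, hq⟩), ⟨hR, hP⟩, rfl⟩
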